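/- arXiv:2012.14021 — 6 statements merged into one kernel-verified Lean document; each statement's English description precedes it below -/
import Mathlib

section
/- Let a₀, a₁, a₂ ∈ ℂ with a₂ ≠ 0, let β ∈ ℂ satisfy β² = a₁² − 4a₀a₂ and Re(β) > 0, set y± = (−a₁ ± β)/(2a₂), and fix y₀ ∈ ℂ with y₀ ≠ y₊. Define y(t) = [y₊(y₀ − y₋) − y₋(y₀ − y₊)exp(βt)] / [(y₀ − y₋) − (y₀ − y₊)exp(βt)]. Then y(t) tends to y₋ as t → +∞ (along the real axis). -/
/-!
The solution is the composite of `t ↦ exp (β * t)`, which escapes to infinity as `t → +∞` because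
`0 < Re β`, with a linear fractional map. The value of that map at infinity is the quotient of its
leading coefficients, `-ym * (y0 - yp)` and `-(y0 - yp)`, which is `ym`.
-/

open Bornology Filter Topology

theorem tendsto_mul_add_div_mul_add_cobounded {𝕜 : Type*} [NormedDivisionRing 𝕜]
    (a b : 𝕜) {c : 𝕜} (hc : c ≠ 0) (d : 𝕜) :
    Tendsto (fun z ↦ (a * z + b) / (c * z + d)) (cobounded 𝕜) (𝓝 (a / c)) := by
  have affine_inv_lim (p q : 𝕜) : Tendsto (fun z ↦ p + q * z⁻¹) (cobounded 𝕜) (𝓝 p) := by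
    simpa only [mul_zero, add_zero] using (tendsto_inv₀_cobounded.const_mul q).const_add p
  refine ((affine_inv_lim a b).div (affine_inv_lim c d) hc).congr' ?_
  filter_upwards [eventually_ne_cobounded 0] with z hz
  calc (a + b * z⁻¹) / (c + d * z⁻¹)
      = (a + b * z⁻¹) * z / ((c + d * z⁻¹) * z) := (mul_div_mul_right _ _ hz).symm
    _ = (a * z + b) / (c * z + d) := by simp only [add_mul, inv_mul_cancel_right₀ hz]

theorem tendsto_exp_mul_ofReal_atTop_cobounded {β : ℂ} (hβ : 0 < β.re) :
    Tendsto (fun t : ℝ ↦ Complex.exp (β * t)) atTop (cobounded ℂ) := by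
  refine Complex.tendsto_exp_comap_re_atTop.comp (tendsto_comap_iff.mpr ?_)
  simpa only [Function.comp_def, Complex.re_mul_ofReal, id] using tendsto_id.const_mul_atTop hβ

theorem stmt_5 (a0 a1 a2 β y0 : ℂ) (ha2 : a2 ≠ 0)
    (hβ : β ^ 2 = a1 ^ 2 - 4 * a0 * a2) (hre : 0 < β.re)
    (yp ym : ℂ) (hyp : yp = (-a1 + β) / (2 * a2)) (hym : ym = (-a1 - β) / (2 * a2))
    (hy0 : y0 ≠ yp)
    (y : ℝ → ℂ)
    (hy : ∀ t : ℝ, y t = (yp * (y0 - ym) - ym * (y0 - yp) * Complex.exp (β * t)) /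
      ((y0 - ym) - (y0 - yp) * Complex.exp (β * t))) :
    Filter.Tendsto y Filter.atTop (nhds ym) := by
  have leading_ne : -(y0 - yp) ≠ 0 := neg_ne_zero.mpr (sub_ne_zero.mpr hy0)
  have hlim := (tendsto_mul_add_div_mul_add_cobounded (ym * -(y0 - yp)) (yp * (y0 - ym))
    leading_ne (y0 - ym)).comp (tendsto_exp_mul_ofReal_atTop_cobounded hre)
  rw [mul_div_cancel_right₀ ym leading_ne] at hlim
  refine hlim.congr fun t ↦ ?_
  simp only [Function.comp_apply, hy t, mul_neg, neg_mul, neg_add_eq_sub]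
end

section
/- Let A₁₁, A₁₂, A₂₁, A₂₂, a₁₂, a₁₁, a₁₀, a₂₂, a₂₁, a₂₀ ∈ ℂ with D := A₁₁A₂₂ − A₁₂A₂₁ ≠ 0. Let y₁, y₂ : ℝ → ℂ be differentiable with y₁′(t) = a₁₂y₁(t)² + a₁₁y₁(t) + a₁₀ and y₂′(t) = a₂₂y₂(t)² + a₂₁y₂(t) + a₂₀ for all t. Define x₁(t) = A₁₁y₁(t) + A₁₂y₂(t) and x₂(t) = A₂₁y₁(t) + A₂₂y₂(t). Then x₁, x₂ satisfy, for all t ∈ ℝ, x₁′ = c₁₁x₁² + c₁₂x₁x₂ + c₁₃x₂² + c₁₄x₁ + c₁₅x₂ + c₁₆ and x₂′ = c₂₁x₁² + c₂₂x₁x₂ + c₂₃x₂² + c₂₄x₁ + c₂₅x₂ + c₂₆, where c₁₁ = [a₁₂A₁₁A₂₂² + a₂₂A₁₂A₂₁²]/D², c₁₂ = −2A₁₁A₁₂[a₁₂A₂₂ + a₂₂A₂₁]/D², c₁₃ = A₁₁A₁₂[a₁₂A₁₂ + a₂₂A₁₁]/D², c₁₄ = (a₁₁A₁₁A₂₂ −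 a₂₁A₁₂A₂₁)/D, c₁₅ = −(a₁₁ − a₂₁)A₁₁A₁₂/D, c₁₆ = a₁₀A₁₁ + a₂₀A₁₂, c₂₃ = [a₂₂A₂₂A₁₁² + a₁₂A₂₁A₁₂²]/D², c₂₂ = −2A₂₂A₂₁[a₂₂A₁₁ + a₁₂A₁₂]/D², c₂₁ = A₂₂A₂₁[a₂₂A₂₁ + a₁₂A₂₂]/D², c₂₅ = (a₂₁A₁₁A₂₂ − a₁₁A₁₂A₂₁)/D, c₂₄ = −(a₂₁ − a₁₁)A₂₂A₂₁/D, c₂₆ = a₂₀A₂₂ + a₁₀A₂₁. -/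
/-!
A left inverse `B` of the matrix `A` of the change of variables recovers `y = B x`. In the new
variables the quadratic form `∑ j, w j * a j * (y j) ^ 2` has Gram matrix
`Bᵀ * diagonal (w * a) * B` and the linear form `∑ j, w j * b j * y j` has coefficient vector
`(w * b) ᵥ* B`; taking for `w` the rows of `A` gives the system satisfied by `x = A y`. For an
invertible `2 × 2` matrix, `B` is the adjugate divided by `D = det A`, which puts `D ^ 2` under the
quadratic coefficients and `D` under the linear ones.
-/

section Riccati

open Matrix Topology

variable {ι κ : Type*} [Fintype ι] [Fintype κ]

theorem dotProduct_transpose_mul_diagonal_mul_mulVec [DecidableEq ι] {R : Type*} [CommRing R]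
    (d : ι → R) (B : Matrix ι κ R) (x : κ → R) :
    x ⬝ᵥ (Bᵀ * diagonal d * B) *ᵥ x = d ⬝ᵥ (B *ᵥ x) ^ 2 := by
  rw [← mulVec_mulVec, ← mulVec_mulVec, dotProduct_mulVec, vecMul_transpose]
  refine Finset.sum_congr rfl fun j _ ↦ ?_
  rw [mulVec_diagonal, Pi.pow_apply]
  ring

theorem dotProduct_transpose_mul_diagonal_mul_mulVec_fin_two {R : Type*} [CommRing R]
    (d : Fin 2 → R) (B : Matrix (Fin 2) (Fin 2) R) (x : Fin 2 → R) :
    x ⬝ᵥ (Bᵀ * diagonal d * B) *ᵥ x =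
      (d 0 * B 0 0 ^ 2 + d 1 * B 1 0 ^ 2) * x 0 ^ 2 +
      2 * (d 0 * B 0 0 * B 0 1 + d 1 * B 1 0 * B 1 1) * x 0 * x 1 +
      (d 0 * B 0 1 ^ 2 + d 1 * B 1 1 ^ 2) * x 1 ^ 2 := by
  rw [dotProduct_transpose_mul_diagonal_mul_mulVec]
  simp only [dotProduct, mulVec, Fin.sum_univ_two, Pi.pow_apply]
  ring

theorem dotProduct_riccati_mulVec [DecidableEq ι] {R : Type*} [CommRing R]
    (w a b c : ι → R) (B : Matrix ι κ R) (x : κ → R) :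
    w ⬝ᵥ (a * (B *ᵥ x) ^ 2 + b * (B *ᵥ x) + c) =
      x ⬝ᵥ (Bᵀ * diagonal (w * a) * B) *ᵥ x + ((w * b) ᵥ* B) ⬝ᵥ x + w ⬝ᵥ c := by
  have dotProduct_mul (u v : ι → R) : w ⬝ᵥ (u * v) = (w * u) ⬝ᵥ v :=
    Finset.sum_congr rfl fun _ _ ↦ (mul_assoc _ _ _).symm
  rw [dotProduct_add, dotProduct_add, dotProduct_mul, dotProduct_mul,
    dotProduct_transpose_mul_diagonal_mul_mulVec, ← dotProduct_mulVec]

variable {𝕜 : Type*} [NontriviallyNormedField 𝕜]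

theorem hasDerivAt_mulVec_of_riccati [DecidableEq ι] {𝔸 : Type*} [NormedCommRing 𝔸]
    [NormedAlgebra 𝕜 𝔸] {A : Matrix κ ι 𝔸} {B : Matrix ι κ 𝔸} (hBA : B * A = 1)
    {a b c : ι → 𝔸} {y : 𝕜 → ι → 𝔸} {x : 𝕜 → κ → 𝔸} {t : 𝕜}
    (hy : HasDerivAt y (a * y t ^ 2 + b * y t + c) t) (hx : x =ᶠ[𝓝 t] fun s ↦ A *ᵥ y s) :
    HasDerivAt x (fun k ↦ x t ⬝ᵥ (Bᵀ * diagonal (A k * a) * B) *ᵥ x t +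
      ((A k * b) ᵥ* B) ⬝ᵥ x t + A k ⬝ᵥ c) t := by
  have y_eq : y t = B *ᵥ x t := by rw [hx.eq_of_nhds, mulVec_mulVec, hBA, one_mulVec]
  simp only [← dotProduct_riccati_mulVec, ← y_eq]
  refine HasDerivAt.congr_of_eventuallyEq (hasDerivAt_pi.2 fun k ↦ ?_) hx
  exact HasDerivAt.fun_sum fun j _ ↦ (hasDerivAt_pi.1 hy j).const_mul (A k j)

theorem adjugate_div_mul_fin_two {K : Type*} [Field K] {a b c d D : K}
    (hD : D = a * d - b * c) (hD₀ : D ≠ 0) :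
    !![d / D, -b / D; -c / D, a / D] * !![a, b; c, d] = 1 := by
  have adjugate_div : !![d / D, -b / D; -c / D, a / D] = D⁻¹ • adjugate !![a, b; c, d] := by
    simp [adjugate_fin_two_of, div_eq_inv_mul]
  rw [adjugate_div, smul_mul, adjugate_mul, det_fin_two_of, ← hD, inv_smul_smul₀ hD₀]

theorem stmt_7_general {𝕂 : Type*} [NormedField 𝕂] [NormedAlgebra 𝕜 𝕂]
    {A₁₁ A₁₂ A₂₁ A₂₂ a₁₂ a₁₁ a₁₀ a₂₂ a₂₁ a₂₀ D : 𝕂}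
    (hD : D = A₁₁ * A₂₂ - A₁₂ * A₂₁) (hD₀ : D ≠ 0) {y₁ y₂ x₁ x₂ : 𝕜 → 𝕂} {t : 𝕜}
    (hy₁ : HasDerivAt y₁ (a₁₂ * y₁ t ^ 2 + a₁₁ * y₁ t + a₁₀) t)
    (hy₂ : HasDerivAt y₂ (a₂₂ * y₂ t ^ 2 + a₂₁ * y₂ t + a₂₀) t)
    (hx₁ : ∀ᶠ s in 𝓝 t, x₁ s = A₁₁ * y₁ s + A₁₂ * y₂ s)
    (hx₂ : ∀ᶠ s in 𝓝 t, x₂ s = A₂₁ * y₁ s + A₂₂ * y₂ s) :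
    HasDerivAt x₁
      ((a₁₂ * A₁₁ * A₂₂ ^ 2 + a₂₂ * A₁₂ * A₂₁ ^ 2) / D ^ 2 * x₁ t ^ 2 +
        -2 * A₁₁ * A₁₂ * (a₁₂ * A₂₂ + a₂₂ * A₂₁) / D ^ 2 * x₁ t * x₂ t +
        A₁₁ * A₁₂ * (a₁₂ * A₁₂ + a₂₂ * A₁₁) / D ^ 2 * x₂ t ^ 2 +
        (a₁₁ * A₁₁ * A₂₂ - a₂₁ * A₁₂ * A₂₁) / D * x₁ t +
        -(a₁₁ - a₂₁) * A₁₁ * A₁₂ / D * x₂ t + (a₁₀ * A₁₁ + a₂₀ * A₁₂)) t ∧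
    HasDerivAt x₂
      (A₂₂ * A₂₁ * (a₂₂ * A₂₁ + a₁₂ * A₂₂) / D ^ 2 * x₁ t ^ 2 +
        -2 * A₂₂ * A₂₁ * (a₂₂ * A₁₁ + a₁₂ * A₁₂) / D ^ 2 * x₁ t * x₂ t +
        (a₂₂ * A₂₂ * A₁₁ ^ 2 + a₁₂ * A₂₁ * A₁₂ ^ 2) / D ^ 2 * x₂ t ^ 2 +
        -(a₂₁ - a₁₁) * A₂₂ * A₂₁ / D * x₁ t +
        (a₂₁ * A₁₁ * A₂₂ - a₁₁ * A₁₂ * A₂₁) / D * x₂ t + (a₂₀ * A₂₂ + a₁₀ * A₂₁)) t := by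
  have hy : HasDerivAt (fun s ↦ ![y₁ s, y₂ s])
      (![a₁₂, a₂₂] * ![y₁ t, y₂ t] ^ 2 + ![a₁₁, a₂₁] * ![y₁ t, y₂ t] + ![a₁₀, a₂₀]) t :=
    hasDerivAt_pi.2 <| Fin.forall_fin_two.2 ⟨hy₁, hy₂⟩
  have hx : (fun s ↦ ![x₁ s, x₂ s]) =ᶠ[𝓝 t]
      fun s ↦ !![A₁₁, A₁₂; A₂₁, A₂₂] *ᵥ ![y₁ s, y₂ s] := by
    filter_upwards [hx₁, hx₂] with s hs₁ hs₂
    rw [hs₁, hs₂, mulVec_fin_two]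
    rfl
  have hx' := hasDerivAt_mulVec_of_riccati (adjugate_div_mul_fin_two hD hD₀) hy hx
  simp only [dotProduct_transpose_mul_diagonal_mul_mulVec_fin_two] at hx'
  refine (Fin.forall_fin_two.1 (hasDerivAt_pi.1 hx')).imp
    (fun h ↦ h.congr_deriv ?_) (fun h ↦ h.congr_deriv ?_)
  all_goals
    simp only [dotProduct, vecMul, Fin.sum_univ_two, Pi.mul_apply, of_apply, cons_val_zero,
      cons_val_one, cons_val']
    ring

end Riccati

theorem stmt_7 (A11 A12 A21 A22 a12 a11 a10 a22 a21 a20 : ℂ)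
    (D : ℂ) (hD : D = A11 * A22 - A12 * A21) (hD0 : D ≠ 0)
    (y1 y2 : ℝ → ℂ)
    (hy1 : ∀ t : ℝ, HasDerivAt y1 (a12 * (y1 t) ^ 2 + a11 * y1 t + a10) t)
    (hy2 : ∀ t : ℝ, HasDerivAt y2 (a22 * (y2 t) ^ 2 + a21 * y2 t + a20) t)
    (x1 x2 : ℝ → ℂ)
    (hx1 : ∀ t : ℝ, x1 t = A11 * y1 t + A12 * y2 t)
    (hx2 : ∀ t : ℝ, x2 t = A21 * y1 t + A22 * y2 t)
    (c11 c12 c13 c14 c15 c16 c21 c22 c23 c24 c25 c26 : ℂ)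
    (hc11 : c11 = (a12 * A11 * A22 ^ 2 + a22 * A12 * A21 ^ 2) / D ^ 2)
    (hc12 : c12 = -2 * A11 * A12 * (a12 * A22 + a22 * A21) / D ^ 2)
    (hc13 : c13 = A11 * A12 * (a12 * A12 + a22 * A11) / D ^ 2)
    (hc14 : c14 = (a11 * A11 * A22 - a21 * A12 * A21) / D)
    (hc15 : c15 = -(a11 - a21) * A11 * A12 / D)
    (hc16 : c16 = a10 * A11 + a20 * A12)
    (hc23 : c23 = (a22 * A22 * A11 ^ 2 + a12 * A21 * A12 ^ 2) / D ^ 2)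
    (hc22 : c22 = -2 * A22 * A21 * (a22 * A11 + a12 * A12) / D ^ 2)
    (hc21 : c21 = A22 * A21 * (a22 * A21 + a12 * A22) / D ^ 2)
    (hc25 : c25 = (a21 * A11 * A22 - a11 * A12 * A21) / D)
    (hc24 : c24 = -(a21 - a11) * A22 * A21 / D)
    (hc26 : c26 = a20 * A22 + a10 * A21) :
    ∀ t : ℝ,
      HasDerivAt x1 (c11 * (x1 t) ^ 2 + c12 * x1 t * x2 t + c13 * (x2 t) ^ 2 +
        c14 * x1 t + c15 * x2 t + c16) t ∧
      HasDerivAt x2 (c21 * (x1 t) ^ 2 + c22 * x1 t * x2 t + c23 * (x2 t) ^ 2 +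
        c24 * x1 t + c25 * x2 t + c26) t := by
  subst hc11 hc12 hc13 hc14 hc15 hc16 hc21 hc22 hc23 hc24 hc25 hc26
  exact fun t ↦ stmt_7_general hD hD0 (hy1 t) (hy2 t) (.of_forall hx1) (.of_forall hx2)
end

section
/- Let A₁₁, A₁₂, A₂₁, A₂₂, a₁₂, a₂₂ ∈ ℂ with A₂₁ ≠ 0, A₂₂ ≠ 0 and D := A₁₁A₂₂ − A₁₂A₂₁ ≠ 0, and define c₁₁ = [a₁₂A₁₁A₂₂² + a₂₂A₁₂A₂₁²]/D², c₁₂ = −2A₁₁A₁₂[a₁₂A₂₂ + a₂₂A₂₁]/D², c₂₂ = −2A₂₂A₂₁[a₂₂A₁₁ + a₁₂A₁₂]/D², c₂₁ = A₂₂A₂₁[a₂₂A₂₁ + a₁₂A₂₂]/D². Then z₁ := A₁₁/A₂₁ and z₂ := A₁₂/A₂₂ both satisfy the quadratic equation 2c₂₁z² − (2c₁₁ − c₂₂)z − c₁₂ = 0. -/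
/-!
Substituting `A11 = z1 * A21` and `A12 = z2 * A22` turns the coefficient formulas into Vieta's
relations for the pair `z1`, `z2`, so the quadratic equals `2 * c21 * (z - z1) * (z - z2)`.
Moreover `z1 - z2 = D / (A21 * A22)`, so the two roots are distinct.
-/

section Vieta

variable {K : Type*} [Field K] {A11 A12 A21 A22 a12 a22 D c11 c12 c21 c22 z1 z2 : K}

theorem linear_coeff_eq_leading_coeff_mul_add
    (hA11 : A11 = z1 * A21) (hA12 : A12 = z2 * A22)
    (hc11 : c11 = (a12 * A11 * A22 ^ 2 + a22 * A12 * A21 ^ 2) / D ^ 2)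
    (hc22 : c22 = -2 * A22 * A21 * (a22 * A11 + a12 * A12) / D ^ 2)
    (hc21 : c21 = A22 * A21 * (a22 * A21 + a12 * A22) / D ^ 2) :
    2 * c11 - c22 = 2 * c21 * (z1 + z2) := by
  subst hA11 hA12 hc11 hc22 hc21
  ring

theorem constant_coeff_eq_leading_coeff_mul_mul
    (hA11 : A11 = z1 * A21) (hA12 : A12 = z2 * A22)
    (hc12 : c12 = -2 * A11 * A12 * (a12 * A22 + a22 * A21) / D ^ 2)
    (hc21 : c21 = A22 * A21 * (a22 * A21 + a12 * A22) / D ^ 2) :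
    -c12 = 2 * c21 * (z1 * z2) := by
  subst hA11 hA12 hc12 hc21
  ring

end Vieta

theorem quadratic_eq_mul_sub_mul_sub {R : Type*} [CommRing R] {a b c r s : R}
    (hb : b = a * (r + s)) (hc : -c = a * (r * s)) (z : R) :
    a * z ^ 2 - b * z - c = a * (z - r) * (z - s) := by
  linear_combination -z * hb + hc

theorem stmt_10_general {K : Type*} [Field K] (A11 A12 A21 A22 a12 a22 : K)
    (hA21 : A21 ≠ 0) (hA22 : A22 ≠ 0)
    (D : K) (hD : D = A11 * A22 - A12 * A21) (hD0 : D ≠ 0)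
    (c11 c12 c21 c22 : K)
    (hc11 : c11 = (a12 * A11 * A22 ^ 2 + a22 * A12 * A21 ^ 2) / D ^ 2)
    (hc12 : c12 = -2 * A11 * A12 * (a12 * A22 + a22 * A21) / D ^ 2)
    (hc22 : c22 = -2 * A22 * A21 * (a22 * A11 + a12 * A12) / D ^ 2)
    (hc21 : c21 = A22 * A21 * (a22 * A21 + a12 * A22) / D ^ 2)
    (z1 z2 : K) (hz1 : z1 = A11 / A21) (hz2 : z2 = A12 / A22) :
    z1 ≠ z2 ∧
    ∀ z, 2 * c21 * z ^ 2 - (2 * c11 - c22) * z - c12 = 2 * c21 * (z - z1) * (z - z2) := by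
  have hA11 : A11 = z1 * A21 := ((eq_div_iff hA21).mp hz1).symm
  have hA12 : A12 = z2 * A22 := ((eq_div_iff hA22).mp hz2).symm
  have det_ne_zero : A11 * A22 - A12 * A21 ≠ 0 := hD ▸ hD0
  constructor
  · rw [hz1, hz2, Ne, div_eq_div_iff hA21 hA22]
    exact sub_ne_zero.mp det_ne_zero
  · exact quadratic_eq_mul_sub_mul_sub
      (linear_coeff_eq_leading_coeff_mul_add hA11 hA12 hc11 hc22 hc21)
      (constant_coeff_eq_leading_coeff_mul_mul hA11 hA12 hc12 hc21)

theorem stmt_10 (A11 A12 A21 A22 a12 a22 : ℂ)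
    (hA21 : A21 ≠ 0) (hA22 : A22 ≠ 0)
    (D : ℂ) (hD : D = A11 * A22 - A12 * A21) (hD0 : D ≠ 0)
    (c11 c12 c21 c22 : ℂ)
    (hc11 : c11 = (a12 * A11 * A22 ^ 2 + a22 * A12 * A21 ^ 2) / D ^ 2)
    (hc12 : c12 = -2 * A11 * A12 * (a12 * A22 + a22 * A21) / D ^ 2)
    (hc22 : c22 = -2 * A22 * A21 * (a22 * A11 + a12 * A12) / D ^ 2)
    (hc21 : c21 = A22 * A21 * (a22 * A21 + a12 * A22) / D ^ 2)
    (z1 z2 : ℂ) (hz1 : z1 = A11 / A21) (hz2 : z2 = A12 / A22) :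
    2 * c21 * z1 ^ 2 - (2 * c11 - c22) * z1 - c12 = 0 ∧
    2 * c21 * z2 ^ 2 - (2 * c11 - c22) * z2 - c12 = 0 := by
  have factored := (stmt_10_general A11 A12 A21 A22 a12 a22 hA21 hA22 D hD hD0
    c11 c12 c21 c22 hc11 hc12 hc22 hc21 z1 z2 hz1 hz2).2
  constructor <;> simp only [factored, sub_self, mul_zero, zero_mul]
end

section
/- Let A₁₁, A₁₂, A₂₁, A₂₂, a₁₂, a₂₂ ∈ ℂ with A₂₁ ≠ 0, A₂₂ ≠ 0 and D := A₁₁A₂₂ − A₁₂A₂₁ ≠ 0, and define c₁₁ = [a₁₂A₁₁A₂₂² + a₂₂A₁₂A₂₁²]/D², c₁₂ = −2A₁₁A₁₂[a₁₂A₂₂ + a₂₂A₂₁]/D², c₁₃ = A₁₁A₁₂[a₁₂A₁₂ + a₂₂A₁₁]/D², c₂₃ = [a₂₂A₂₂A₁₁² + a₁₂A₂₁A₁₂²]/D², c₂₂ = −2A₂₂A₂₁[a₂₂A₁₁ + a₁₂A₁₂]/D², c₂₁ = A₂₂A₂₁[a₂₂A₂₁ + a₁₂A₂₂]/D². Then z₁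 := A₁₁/A₂₁ and z₂ := A₁₂/A₂₂ both satisfy the cubic equation c₂₁z³ + (c₂₂ − c₁₁)z² + (c₂₃ − c₁₂)z − c₁₃ = 0. -/
/-!
In the coordinates `y` the quadratic part of the system is the decoupled Riccati field
`(a₁₂ y₁², a₂₂ y₂²)`, for which both coordinate axes are invariant. Hence the transported field in
the coordinates `x = A y` is parallel to each column of `A` along that column. A homogeneous
quadratic planar field is parallel to `(z, 1)` at `(z, 1)` exactly when `z` is a root of the cubic.
-/

open Matrix

section TransportedField

variable {n R : Type*} [Fintype n] [DecidableEq n] [CommRing R]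

/-- The decoupled quadratic vector field `ẏᵢ = rᵢ yᵢ²`, expressed in the coordinates `x = A y`.
It is meaningful only when `A` is invertible, since otherwise `A⁻¹` is `0`. -/
noncomputable def riccatiField (A : Matrix n n R) (r x : n → R) : n → R :=
  A *ᵥ (r * (A⁻¹ *ᵥ x) ^ 2)

theorem riccatiField_col {A : Matrix n n R} (hA : IsUnit A.det) (r : n → R) (j : n) :
    riccatiField A r (A.col j) = r j • A.col j := by
  have hcol : A⁻¹ *ᵥ A.col j = Pi.single j 1 := by
    rw [← mulVec_single_one, mulVec_mulVec, nonsing_inv_mul A hA, one_mulVec]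
  have haxis : r * (Pi.single j 1 : n → R) ^ 2 = r j • Pi.single j 1 := by
    ext i
    obtain rfl | hij := eq_or_ne i j
    · simp
    · simp [hij]
  rw [riccatiField, hcol, haxis, mulVec_smul, mulVec_single_one]

end TransportedField

/-- The binary quadratic form `a x² + b x y + c y²`; a pair of such forms is a homogeneous
quadratic vector field on the plane. -/
def binaryQuadraticForm {R : Type*} [CommSemiring R] (a b c x y : R) : R :=
  a * x ^ 2 + b * x * y + c * y ^ 2

section Plane

variable {K : Type*} [Field K]

theorem riccatiField_fin_two_apply (A : Matrix (Fin 2) (Fin 2) K) (r x : Fin 2 → K) (i : Fin 2) :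
    riccatiField A r x i = binaryQuadraticForm
      ((r 0 * A i 0 * A 1 1 ^ 2 + r 1 * A i 1 * A 1 0 ^ 2) / A.det ^ 2)
      (-2 * (r 0 * A i 0 * A 0 1 * A 1 1 + r 1 * A i 1 * A 0 0 * A 1 0) / A.det ^ 2)
      ((r 0 * A i 0 * A 0 1 ^ 2 + r 1 * A i 1 * A 0 0 ^ 2) / A.det ^ 2) (x 0) (x 1) := by
  have hinv : A⁻¹ *ᵥ x =
      ![(A 1 1 * x 0 - A 0 1 * x 1) / A.det, (A 0 0 * x 1 - A 1 0 * x 0) / A.det] := by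
    rw [inv_def, Ring.inverse_eq_inv', adjugate_fin_two]
    ext k
    fin_cases k <;> simp [mulVec, dotProduct, Fin.sum_univ_two] <;> ring
  simp only [riccatiField, hinv, mulVec, dotProduct, Fin.sum_univ_two, Pi.mul_apply, Pi.pow_apply,
    cons_val_zero, cons_val_one, binaryQuadraticForm]
  ring

theorem cubic_div_eq_zero_iff (a b c a' b' c' : K) {x y : K} (hy : y ≠ 0) :
    a' * (x / y) ^ 3 + (b' - a) * (x / y) ^ 2 + (c' - b) * (x / y) - c = 0 ↔
      x * binaryQuadraticForm a' b' c' x y = y * binaryQuadraticForm a b c x y := by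
  have hhom : a' * (x / y) ^ 3 + (b' - a) * (x / y) ^ 2 + (c' - b) * (x / y) - c =
      (x * binaryQuadraticForm a' b' c' x y - y * binaryQuadraticForm a b c x y) / y ^ 3 := by
    simp only [binaryQuadraticForm]
    field_simp
    ring
  rw [hhom, div_eq_zero_iff, or_iff_left (pow_ne_zero 3 hy), sub_eq_zero]

theorem cubic_col_div_eq_zero {A : Matrix (Fin 2) (Fin 2) K} (hA : A.det ≠ 0) {r : Fin 2 → K}
    {a b c a' b' c' : K}
    (h₀ : ∀ x, riccatiField A r x 0 = binaryQuadraticForm a b c (x 0) (x 1))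
    (h₁ : ∀ x, riccatiField A r x 1 = binaryQuadraticForm a' b' c' (x 0) (x 1))
    {j : Fin 2} (hj : A 1 j ≠ 0) :
    a' * (A 0 j / A 1 j) ^ 3 + (b' - a) * (A 0 j / A 1 j) ^ 2 + (c' - b) * (A 0 j / A 1 j) - c
      = 0 := by
  have hcol := riccatiField_col hA.isUnit r j
  have hfst : binaryQuadraticForm a b c (A 0 j) (A 1 j) = r j * A 0 j :=
    (h₀ (A.col j)).symm.trans (congrFun hcol 0)
  have hsnd : binaryQuadraticForm a' b' c' (A 0 j) (A 1 j) = r j * A 1 j :=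
    (h₁ (A.col j)).symm.trans (congrFun hcol 1)
  rw [cubic_div_eq_zero_iff _ _ _ _ _ _ hj, hfst, hsnd]
  ring

end Plane

theorem stmt_12_general {K : Type*} [Field K] (A11 A12 A21 A22 a12 a22 : K)
    (hA21 : A21 ≠ 0) (hA22 : A22 ≠ 0)
    (D : K) (hD : D = A11 * A22 - A12 * A21) (hD0 : D ≠ 0)
    (c11 c12 c13 c21 c22 c23 : K)
    (hc11 : c11 = (a12 * A11 * A22 ^ 2 + a22 * A12 * A21 ^ 2) / D ^ 2)
    (hc12 : c12 = -2 * A11 * A12 * (a12 * A22 + a22 * A21) / D ^ 2)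
    (hc13 : c13 = A11 * A12 * (a12 * A12 + a22 * A11) / D ^ 2)
    (hc23 : c23 = (a22 * A22 * A11 ^ 2 + a12 * A21 * A12 ^ 2) / D ^ 2)
    (hc22 : c22 = -2 * A22 * A21 * (a22 * A11 + a12 * A12) / D ^ 2)
    (hc21 : c21 = A22 * A21 * (a22 * A21 + a12 * A22) / D ^ 2)
    (z1 z2 : K) (hz1 : z1 = A11 / A21) (hz2 : z2 = A12 / A22) :
    c21 * z1 ^ 3 + (c22 - c11) * z1 ^ 2 + (c23 - c12) * z1 - c13 = 0 ∧
    c21 * z2 ^ 3 + (c22 - c11) * z2 ^ 2 + (c23 - c12) * z2 - c13 = 0 := by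
  let A := !![A11, A12; A21, A22]
  have hdet : A.det = D := (det_fin_two_of ..).trans hD.symm
  have hA : A.det ≠ 0 := hdet ▸ hD0
  have hfst (x : Fin 2 → K) :
      riccatiField A ![a12, a22] x 0 = binaryQuadraticForm c11 c12 c13 (x 0) (x 1) := by
    rw [riccatiField_fin_two_apply, hdet, hc11, hc12, hc13]
    congr 1 <;> simp [A] <;> ring
  have hsnd (x : Fin 2 → K) :
      riccatiField A ![a12, a22] x 1 = binaryQuadraticForm c21 c22 c23 (x 0) (x 1) := by
    rw [riccatiField_fin_two_apply, hdet, hc21, hc22, hc23]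
    congr 1 <;> simp [A] <;> ring
  subst hz1 hz2
  exact ⟨cubic_col_div_eq_zero hA hfst hsnd (j := 0) hA21,
    cubic_col_div_eq_zero hA hfst hsnd (j := 1) hA22⟩

theorem stmt_12 (A11 A12 A21 A22 a12 a22 : ℂ)
    (hA21 : A21 ≠ 0) (hA22 : A22 ≠ 0)
    (D : ℂ) (hD : D = A11 * A22 - A12 * A21) (hD0 : D ≠ 0)
    (c11 c12 c13 c21 c22 c23 : ℂ)
    (hc11 : c11 = (a12 * A11 * A22 ^ 2 + a22 * A12 * A21 ^ 2) / D ^ 2)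
    (hc12 : c12 = -2 * A11 * A12 * (a12 * A22 + a22 * A21) / D ^ 2)
    (hc13 : c13 = A11 * A12 * (a12 * A12 + a22 * A11) / D ^ 2)
    (hc23 : c23 = (a22 * A22 * A11 ^ 2 + a12 * A21 * A12 ^ 2) / D ^ 2)
    (hc22 : c22 = -2 * A22 * A21 * (a22 * A11 + a12 * A12) / D ^ 2)
    (hc21 : c21 = A22 * A21 * (a22 * A21 + a12 * A22) / D ^ 2)
    (z1 z2 : ℂ) (hz1 : z1 = A11 / A21) (hz2 : z2 = A12 / A22) :
    c21 * z1 ^ 3 + (c22 - c11) * z1 ^ 2 + (c23 - c12) * z1 - c13 = 0 ∧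
    c21 * z2 ^ 3 + (c22 - c11) * z2 ^ 2 + (c23 - c12) * z2 - c13 = 0 :=
  stmt_12_general A11 A12 A21 A22 a12 a22 hA21 hA22 D hD hD0 c11 c12 c13 c21 c22 c23
    hc11 hc12 hc13 hc23 hc22 hc21 z1 z2 hz1 hz2
end

section
/- Let c₁₁, c₁₂, c₁₃, c₂₁, c₂₂, c₂₃ ∈ ℂ and z₁, z₂ ∈ ℂ with z₁ ≠ z₂. Suppose the two relations hold: [−c₂₁z₂² + (c₁₁ − c₂₂/2)z₂ + c₁₂/2]z₁ − c₂₂z₂²/2 + (c₁₂/2 − c₂₃)z₂ + c₁₃ = 0 and [−c₂₁z₁² + (c₁₁ − c₂₂/2)z₁ + c₁₂/2]z₂ − c₂₂z₁²/2 + (c₁₂/2 − c₂₃)z₁ + c₁₃ = 0. Then c₁₃ = −c₁₁z₁z₂ − c₁₂(z₁ + z₂)/2 and c₂₃ = −c₂₁z₁z₂ − c₂₂(z₁ + z₂)/2. -/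
/-!
Write the quadratic part of `ẋₙ` as `aₙ x₁² + 2 bₙ x₁ x₂ + dₙ x₂²`, and let `Bₙ` be the value of its
polarization at the pair of vectors `(z, 1)`, `(w, 1)`. The two compatibility relations say
`B₁ = w B₂` and `B₁ = z B₂`: the vector `(B₁, B₂)` lies on both lines spanned by `(w, 1)` and
`(z, 1)`. These lines are distinct, so `B₁ = B₂ = 0`, which is the claim.
-/

/-- The symmetric bilinear form with matrix `[[a, b], [b, d]]`, evaluated at `(z, 1)` and `(w, 1)`.
It is the polarization of the binary quadratic form `a x₁² + 2 b x₁ x₂ + d x₂²`; the factor `2` in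
the middle coefficient avoids dividing by two. -/
def binaryPolar {R : Type*} [Semiring R] (a b d z w : R) : R :=
  a * z * w + b * (z + w) + d

theorem eq_zero_and_eq_zero_of_eq_mul_of_eq_mul {M₀ : Type*} [MulZeroClass M₀]
    [IsRightCancelMulZero M₀] {p q z w : M₀} (hzw : z ≠ w) (hz : p = z * q) (hw : p = w * q) :
    p = 0 ∧ q = 0 := by
  have hq : q = 0 := by
    by_contra hq
    exact hzw (mul_right_cancel₀ hq (hz.symm.trans hw))
  exact ⟨by rw [hz, hq, mul_zero], hq⟩

section CommRing

variable {R : Type*} [CommRing R] {a₁ b₁ d₁ a₂ b₂ d₂ z w : R}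

theorem binaryPolar_comm (a b d z w : R) : binaryPolar a b d z w = binaryPolar a b d w z := by
  simp only [binaryPolar]
  ring

theorem binaryPolar_eq_zero_iff {a b d z w : R} :
    binaryPolar a b d z w = 0 ↔ d = -a * z * w - b * (z + w) := by
  rw [binaryPolar, add_comm, add_eq_zero_iff_eq_neg, neg_add', neg_mul, neg_mul]

theorem binaryPolar_eq_mul_binaryPolar_iff :
    binaryPolar a₁ b₁ d₁ z w = w * binaryPolar a₂ b₂ d₂ z w ↔
      (-a₂ * w ^ 2 + (a₁ - b₂) * w + b₁) * z - b₂ * w ^ 2 + (b₁ - d₂) * w + d₁ = 0 := by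
  rw [← sub_eq_zero, binaryPolar, binaryPolar]
  ring_nf

theorem stmt_15_general [NoZeroDivisors R] (hzw : z ≠ w)
    (h₁ : (-a₂ * w ^ 2 + (a₁ - b₂) * w + b₁) * z - b₂ * w ^ 2 + (b₁ - d₂) * w + d₁ = 0)
    (h₂ : (-a₂ * z ^ 2 + (a₁ - b₂) * z + b₁) * w - b₂ * z ^ 2 + (b₁ - d₂) * z + d₁ = 0) :
    d₁ = -a₁ * z * w - b₁ * (z + w) ∧ d₂ = -a₂ * z * w - b₂ * (z + w) := by
  rw [← binaryPolar_eq_mul_binaryPolar_iff] at h₁ h₂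
  rw [binaryPolar_comm a₁, binaryPolar_comm a₂] at h₂
  rw [← binaryPolar_eq_zero_iff, ← binaryPolar_eq_zero_iff]
  exact eq_zero_and_eq_zero_of_eq_mul_of_eq_mul hzw h₂ h₁

end CommRing

theorem stmt_15 (c11 c12 c13 c21 c22 c23 z1 z2 : ℂ) (hz : z1 ≠ z2)
    (h1 : (-c21 * z2 ^ 2 + (c11 - c22 / 2) * z2 + c12 / 2) * z1 -
      c22 * z2 ^ 2 / 2 + (c12 / 2 - c23) * z2 + c13 = 0)
    (h2 : (-c21 * z1 ^ 2 + (c11 - c22 / 2) * z1 + c12 / 2) * z2 -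
      c22 * z1 ^ 2 / 2 + (c12 / 2 - c23) * z1 + c13 = 0) :
    c13 = -c11 * z1 * z2 - c12 * (z1 + z2) / 2 ∧
    c23 = -c21 * z1 * z2 - c22 * (z1 + z2) / 2 := by
  rw [mul_div_right_comm] at h1 h2
  simpa only [mul_div_right_comm] using stmt_15_general hz h1 h2
end

section
/- Let f₁, f₂, g, h₁, h₂ ∈ ℂ with f₁ ≠ 0 and f₂ ≠ 0. Let ξ₁, ξ₂ : ℝ → ℂ be differentiable with ξ₁′(t) = f₂ξ₁(t)² + gξ₁(t) + ((f₁/f₂)h₁ + h₂) and ξ₂′(t) = −f₂ξ₂(t)² + gξ₂(t) − (f₁/f₂)h₁ for all t. Define x₁(t) = −(f₂/f₁)ξ₂(t) and x₂(t) = ξ₁(t) + ξ₂(t). Then x₁ and x₂ satisfy, for all t ∈ ℝ, x₁′ = x₁(f₁x₁ + g) + h₁ and x₂′ = x₂(2f₁x₁ + f₂x₂ + g) + h₂. -/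
/-!
Scaling by `k` turns a Riccati equation with leading coefficient `k * a` into one with leading
coefficient `a`. With `k = -(f2 / f1)` and `a = f1` this gives the equation for `x1`, since
`k * f1 = -f2`. When two Riccati equations share the linear coefficient and have opposite leading
coefficients, `ξ1 ^ 2 - ξ2 ^ 2` is divisible by `ξ1 + ξ2`, so the derivative of `x2 = ξ1 + ξ2` is a
multiple of `x2` up to a constant. In the cofactor, `f2 * (ξ1 - ξ2) = f2 * x2 - 2 * f2 * ξ2`, and
the last term is `2 * f1 * x1`.
-/

section Riccati

variable {𝕜 A : Type*} [NontriviallyNormedField 𝕜] [NormedCommRing A] [NormedAlgebra 𝕜 A]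
  {y z : 𝕜 → A} {t : 𝕜} {a b c d : A}

theorem hasDerivAt_const_mul_of_riccati (k : A)
    (hy : HasDerivAt y (k * a * y t ^ 2 + b * y t + c) t) :
    HasDerivAt (fun s => k * y s) (a * (k * y t) ^ 2 + b * (k * y t) + k * c) t :=
  (hy.const_mul k).congr_deriv (by ring)

theorem hasDerivAt_add_of_riccati_of_neg_riccati
    (hy : HasDerivAt y (a * y t ^ 2 + b * y t + c) t)
    (hz : HasDerivAt z (-a * z t ^ 2 + b * z t + d) t) :
    HasDerivAt (fun s => y s + z s) ((y t + z t) * (a * (y t - z t) + b) + (c + d)) t :=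
  (hy.add hz).congr_deriv (by ring)

end Riccati

theorem stmt_17_general {𝕜 K : Type*} [NontriviallyNormedField 𝕜] [NormedField K]
    [NormedAlgebra 𝕜 K] {f1 f2 g h1 h2 : K} (hf1 : f1 ≠ 0) (hf2 : f2 ≠ 0)
    {ξ1 ξ2 x1 x2 : 𝕜 → K} {t : 𝕜}
    (hξ1 : HasDerivAt ξ1 (f2 * ξ1 t ^ 2 + g * ξ1 t + (f1 / f2 * h1 + h2)) t)
    (hξ2 : HasDerivAt ξ2 (-f2 * ξ2 t ^ 2 + g * ξ2 t - f1 / f2 * h1) t)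
    (hx1 : ∀ s, x1 s = -(f2 / f1) * ξ2 s) (hx2 : ∀ s, x2 s = ξ1 s + ξ2 s) :
    HasDerivAt x1 (x1 t * (f1 * x1 t + g) + h1) t ∧
      HasDerivAt x2 (x2 t * (2 * f1 * x1 t + f2 * x2 t + g) + h2) t := by
  have scale_f1 : -(f2 / f1) * f1 = -f2 := by rw [neg_mul, div_mul_cancel₀ f2 hf1]
  have scale_h1 : -(f2 / f1) * -(f1 / f2 * h1) = h1 := by field_simp
  have f1_mul_x1 : f1 * x1 t = -f2 * ξ2 t := by
    rw [hx1, ← mul_assoc, mul_comm f1, scale_f1]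
  rw [sub_eq_add_neg] at hξ2
  constructor
  · have hscaled := hasDerivAt_const_mul_of_riccati (a := f1) (-(f2 / f1)) (scale_f1 ▸ hξ2)
    rw [scale_h1, ← hx1, ← funext hx1] at hscaled
    exact hscaled.congr_deriv (by ring)
  · have hsum := hasDerivAt_add_of_riccati_of_neg_riccati hξ1 hξ2
    have cofactor : f2 * (ξ1 t - ξ2 t) = 2 * f1 * x1 t + f2 * x2 t := by
      rw [mul_assoc, f1_mul_x1, hx2]
      ring
    rw [cofactor, ← hx2, ← funext hx2] at hsum
    exact hsum.congr_deriv (by ring)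

theorem stmt_17 (f1 f2 g h1 h2 : ℂ) (hf1 : f1 ≠ 0) (hf2 : f2 ≠ 0)
    (ξ1 ξ2 : ℝ → ℂ)
    (hξ1 : ∀ t : ℝ, HasDerivAt ξ1 (f2 * (ξ1 t) ^ 2 + g * ξ1 t + ((f1 / f2) * h1 + h2)) t)
    (hξ2 : ∀ t : ℝ, HasDerivAt ξ2 (-f2 * (ξ2 t) ^ 2 + g * ξ2 t - (f1 / f2) * h1) t)
    (x1 x2 : ℝ → ℂ)
    (hx1 : ∀ t : ℝ, x1 t = -(f2 / f1) * ξ2 t)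
    (hx2 : ∀ t : ℝ, x2 t = ξ1 t + ξ2 t) :
    ∀ t : ℝ,
      HasDerivAt x1 (x1 t * (f1 * x1 t + g) + h1) t ∧
      HasDerivAt x2 (x2 t * (2 * f1 * x1 t + f2 * x2 t + g) + h2) t :=
  fun t => stmt_17_general hf1 hf2 (hξ1 t) (hξ2 t) hx1 hx2
end
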